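/- Let G be an exchange network for which the LP relaxation of maximum weight matching admits a unique optimum, and this optimum is integral, corresponding to the matching M*. Let α be a fixed point of the natural dynamics update operator, with associated offers m and earnings vector γ. Then α induces the matching M*, and (M*, γ) is a Nash bargaining solution. -/

import Mathlib

namespace EN

open Finset

variable {V : Type*}

/-- The nonnegative part `(x)₊ = max (x, 0)`. -/
noncomputable def pos (x : ℝ) : ℝ := max x 0

variable [Fintype V] [DecidableEq V]

/-- The maximum of `f` over a finite set of vertices (`0` over the empty set). -/
noncomputable def fmax (s : Finset V) (f : V → ℝ) : ℝ := ⨆ k ∈ s, f k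

/-- The offer from `i` to `j` given messages `α` and weights `w`:
`m_{i→j} = (w_{ij} − α_{i\j})₊ − (1/2) (w_{ij} − α_{i\j} − α_{j\i})₊`. -/
noncomputable def offer (w α : V → V → ℝ) (i j : V) : ℝ :=
  pos (w i j - α i j) - (1 / 2) * pos (w i j - α i j - α j i)

/-- The update operator `T` of the natural dynamics:
`(Tα)_{i\j} = max_{k ∈ ∂i \ j} m_{k→i}`. -/
noncomputable def upd (G : SimpleGraph V) [DecidableRel G.Adj] (w α : V → V → ℝ)
    (i j : V) : ℝ :=
  fmax ((G.neighborFinset i).erase j) fun k => offer w α k i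

/-- The earnings estimate `γ_i = max_{k ∈ ∂i} m_{k→i}`. -/
noncomputable def earn (G : SimpleGraph V) [DecidableRel G.Adj] (w α : V → V → ℝ)
    (i : V) : ℝ :=
  fmax (G.neighborFinset i) fun k => offer w α k i

/-- Exchange network weights: symmetric and positive on every edge. -/
def GoodW (G : SimpleGraph V) (w : V → V → ℝ) : Prop :=
  (∀ i j, w i j = w j i) ∧ ∀ i j, G.Adj i j → 0 < w i j

/-- A valid message vector: nonnegative on all directed edges. -/
def ValidMsg (G : SimpleGraph V) (α : V → V → ℝ) : Prop :=
  ∀ i j, G.Adj i j → 0 ≤ α i j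

/-- Fixed point of the natural-dynamics update operator. -/
def IsFixedPt (G : SimpleGraph V) [DecidableRel G.Adj] (w α : V → V → ℝ) : Prop :=
  ∀ i j, G.Adj i j → upd G w α i j = α i j

/-- `ε`-fixed point. -/
def IsEpsFixedPt (G : SimpleGraph V) [DecidableRel G.Adj] (w α : V → V → ℝ) (ε : ℝ) : Prop :=
  ∀ i j, G.Adj i j → |α i j - upd G w α i j| ≤ ε

/-- The natural dynamics with damping factor `κ`: `α^{t+1} = (1−κ) α^t + κ T α^t`. -/
noncomputable def dyn (G : SimpleGraph V) [DecidableRel G.Adj] (w : V → V → ℝ) (κ : ℝ)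
    (α0 : V → V → ℝ) : ℕ → V → V → ℝ
  | 0 => α0
  | t + 1 => fun i j =>
      (1 - κ) * dyn G w κ α0 t i j + κ * upd G w (dyn G w κ α0 t) i j

/-- Sup norm over directed edges. -/
noncomputable def msgSup (G : SimpleGraph V) [DecidableRel G.Adj] (f : V → V → ℝ) : ℝ :=
  ⨆ p : V × V, if G.Adj p.1 p.2 then |f p.1 p.2| else 0

/-- `M` is a matching of `G`: a symmetric subrelation of adjacency pairing each node
with at most one partner. -/
structure IsMatching (G : SimpleGraph V) (M : V → V → Prop) : Prop where
  subset : ∀ i j, M i j → G.Adj i j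
  symm : ∀ i j, M i j → M j i
  unique : ∀ i j k, M i j → M i k → j = k

/-- `(M, γ)` is a trade outcome. -/
def IsOutcome (G : SimpleGraph V) (w : V → V → ℝ) (M : V → V → Prop) (γ : V → ℝ) : Prop :=
  IsMatching G M ∧ (∀ i, 0 ≤ γ i) ∧ (∀ i j, M i j → γ i + γ j = w i j) ∧
    ∀ i, (∀ j, ¬M i j) → γ i = 0

/-- Stability of an outcome. -/
def Stable (G : SimpleGraph V) (w : V → V → ℝ) (M : V → V → Prop) (γ : V → ℝ) : Prop :=
  ∀ i j, G.Adj i j → ¬M i j → w i j ≤ γ i + γ j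

/-- The best alternative of `i` excluding `j`: `max_{k ∈ ∂i \ j} (w_{ik} − γ_k)₊`. -/
noncomputable def bestAlt (G : SimpleGraph V) [DecidableRel G.Adj] (w : V → V → ℝ)
    (γ : V → ℝ) (i j : V) : ℝ :=
  fmax ((G.neighborFinset i).erase j) fun k => pos (w i k - γ k)

/-- Balance of an outcome. -/
def Balanced (G : SimpleGraph V) [DecidableRel G.Adj] (w : V → V → ℝ) (M : V → V → Prop)
    (γ : V → ℝ) : Prop :=
  ∀ i j, M i j → γ i - bestAlt G w γ i j = γ j - bestAlt G w γ j i

/-- Nash bargaining solution: a stable and balanced trade outcome. -/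
def IsNBSolution (G : SimpleGraph V) [DecidableRel G.Adj] (w : V → V → ℝ)
    (M : V → V → Prop) (γ : V → ℝ) : Prop :=
  IsOutcome G w M γ ∧ Stable G w M γ ∧ Balanced G w M γ

/-- `ε`-balance. -/
def EpsBalanced (G : SimpleGraph V) [DecidableRel G.Adj] (w : V → V → ℝ)
    (M : V → V → Prop) (γ : V → ℝ) (ε : ℝ) : Prop :=
  ∀ i j, M i j → |(γ i - bestAlt G w γ i j) - (γ j - bestAlt G w γ j i)| ≤ ε

/-- `ε`-Nash bargaining solution. -/
def IsEpsNB (G : SimpleGraph V) [DecidableRel G.Adj] (w : V → V → ℝ)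
    (M : V → V → Prop) (γ : V → ℝ) (ε : ℝ) : Prop :=
  IsOutcome G w M γ ∧ Stable G w M γ ∧ EpsBalanced G w M γ ε

/-- Feasible point of the LP relaxation of maximum weight matching. -/
def LPFeasible (G : SimpleGraph V) [DecidableRel G.Adj] (x : V → V → ℝ) : Prop :=
  (∀ i j, x i j = x j i) ∧ (∀ i j, 0 ≤ x i j) ∧ (∀ i j, ¬G.Adj i j → x i j = 0) ∧
    ∀ i, ∑ j ∈ G.neighborFinset i, x i j ≤ 1

/-- LP objective `Σ_{(i,j)∈E} w_{ij} x_{ij}` (each undirected edge counted once). -/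
noncomputable def LPval (G : SimpleGraph V) [DecidableRel G.Adj] (w x : V → V → ℝ) : ℝ :=
  (1 / 2) * ∑ i, ∑ j ∈ G.neighborFinset i, w i j * x i j

/-- Optimal point of the LP relaxation of maximum weight matching. -/
def LPOptimal (G : SimpleGraph V) [DecidableRel G.Adj] (w x : V → V → ℝ) : Prop :=
  LPFeasible G x ∧ ∀ y, LPFeasible G y → LPval G w y ≤ LPval G w x

def Integral (x : V → V → ℝ) : Prop := ∀ i j, x i j = 0 ∨ x i j = 1

def HalfIntegral (x : V → V → ℝ) : Prop := ∀ i j, x i j = 0 ∨ x i j = 1 / 2 ∨ x i j = 1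

open Classical in
/-- The LP point associated to a matching. -/
noncomputable def mInd (M : V → V → Prop) (i j : V) : ℝ := if M i j then 1 else 0

/-- The state with offers `m` induces the matching `M`: every node receiving a positive
offer is matched and receives its unique best offer from its partner, and every node
with zero earnings is unmatched. -/
def Induces (G : SimpleGraph V) [DecidableRel G.Adj] (m : V → V → ℝ)
    (M : V → V → Prop) : Prop :=
  IsMatching G M ∧
    (∀ i, (∃ k, G.Adj i k ∧ 0 < m k i) →
      ∃ j, M i j ∧ ∀ k, G.Adj i k → k ≠ j → m k i < m j i) ∧
    ∀ i, (fmax (G.neighborFinset i) fun k => m k i) = 0 → ∀ j, ¬M i j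

/-- Feasibility for the dual LP. -/
def DualFeasible (G : SimpleGraph V) (w : V → V → ℝ) (y : V → ℝ) : Prop :=
  (∀ i, 0 ≤ y i) ∧ ∀ i j, G.Adj i j → w i j ≤ y i + y j

/-- Optimality for the dual LP. -/
def DualOptimal (G : SimpleGraph V) (w : V → V → ℝ) (y : V → ℝ) : Prop :=
  DualFeasible G w y ∧ ∀ z, DualFeasible G w z → ∑ i, y i ≤ ∑ i, z i

/-- The unmatched balance property at every edge. -/
def UnmatchedBalance (G : SimpleGraph V) [DecidableRel G.Adj] (w : V → V → ℝ)
    (y : V → ℝ) : Prop :=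
  ∀ i j, G.Adj i j → y i - bestAlt G w y i j = y j - bestAlt G w y j i

/-! ### Unequal division -/

/-- Valid split fractions: `r_{ij} ∈ (0,1)` with `r_{ij} + r_{ji} = 1` on every edge. -/
def GoodR (G : SimpleGraph V) (r : V → V → ℝ) : Prop :=
  ∀ i j, G.Adj i j → 0 < r i j ∧ r i j < 1 ∧ r i j + r j i = 1

/-- The UD offer from `i` to `j`. -/
noncomputable def offerUD (w r α : V → V → ℝ) (i j : V) : ℝ :=
  pos (w i j - α i j) - r i j * pos (w i j - α i j - α j i)

/-- The UD update operator. -/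
noncomputable def updUD (G : SimpleGraph V) [DecidableRel G.Adj] (w r α : V → V → ℝ)
    (i j : V) : ℝ :=
  fmax ((G.neighborFinset i).erase j) fun k => offerUD w r α k i

/-- The UD earnings estimate. -/
noncomputable def earnUD (G : SimpleGraph V) [DecidableRel G.Adj] (w r α : V → V → ℝ)
    (i : V) : ℝ :=
  fmax (G.neighborFinset i) fun k => offerUD w r α k i

/-- Fixed point of the UD update operator. -/
def IsFixedPtUD (G : SimpleGraph V) [DecidableRel G.Adj] (w r α : V → V → ℝ) : Prop :=
  ∀ i j, G.Adj i j → updUD G w r α i j = α i j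

/-- Correct division. -/
def CorrectDiv (G : SimpleGraph V) [DecidableRel G.Adj] (w r : V → V → ℝ)
    (M : V → V → Prop) (γ : V → ℝ) : Prop :=
  ∀ i j, M i j →
    (1 / r i j) * (γ i - bestAlt G w γ i j) = (1 / r j i) * (γ j - bestAlt G w γ j i)

/-- UD solution: a stable trade outcome satisfying correct division. -/
def IsUDSolution (G : SimpleGraph V) [DecidableRel G.Adj] (w r : V → V → ℝ)
    (M : V → V → Prop) (γ : V → ℝ) : Prop :=
  IsOutcome G w M γ ∧ Stable G w M γ ∧ CorrectDiv G w r M γ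

/-- Edge surplus. -/
noncomputable def surp (G : SimpleGraph V) [DecidableRel G.Adj] (w : V → V → ℝ)
    (γ : V → ℝ) (i j : V) : ℝ :=
  w i j - bestAlt G w γ i j - bestAlt G w γ j i

open Classical in
/-- The rebalanced allocation `γ^reb`. -/
noncomputable def reb (G : SimpleGraph V) [DecidableRel G.Adj] (w r : V → V → ℝ)
    (M : V → V → Prop) (γ : V → ℝ) (i : V) : ℝ :=
  if h : ∃ j, M i j then
    bestAlt G w γ i h.choose + r i h.choose * surp G w γ i h.choose
  else 0

/-- The Edge Rebalancing iteration `γ^{t+1} = κ γ^reb(γ^t) + (1−κ) γ^t`. -/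
noncomputable def rebIter (G : SimpleGraph V) [DecidableRel G.Adj] (w r : V → V → ℝ)
    (M : V → V → Prop) (κ : ℝ) (γ0 : V → ℝ) : ℕ → V → ℝ
  | 0 => γ0
  | t + 1 => fun i =>
      κ * reb G w r M (rebIter G w r M κ γ0 t) i + (1 - κ) * rebIter G w r M κ γ0 t i

/-!
At a fixed point, `earn i = α i j + (w i j - α i j - α j i)₊ / 2` along every edge, so the best
alternative of `i` to `j` is `α i j`. Hence the earnings `γ` are dual feasible and balanced across
every edge, matched or not.

Uniqueness of the LP optimum provides dual prices `y`, by strict complementarity, whose tight edges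
are exactly those of `M*`. Suppose some edge outside `M*` is tight for `γ`. By balance, if a node
has such an edge then so does its partner, provided that the partner earns something. Among the
nodes with positive earnings and such an edge, take one, `v`, where `y - γ` is smallest. At every
node with such an edge, `y - γ` is at most `max 0 (-(y v - γ v))`, while it has positive sum over
the two ends of such an edge. Applying this to the edge at `v` gives a contradiction.
-/

section LinearProgramming

open Matrix

variable {K : Type*} [Field K]

section Farkas

variable {ι E : Type*} [AddCommGroup E] [Module K E]

/-- The projection of the dual space along `a` onto the functionals vanishing at `x`, used to
eliminate the generator `a` of a cone. It is the identity when `a x = 0`, as then `(a x)⁻¹ = 0`. -/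
def dualProj (a : Module.Dual K E) (x : E) : Module.Dual K E →ₗ[K] Module.Dual K E :=
  .id - ((a x)⁻¹ • Module.Dual.eval K E x).smulRight a

theorem dualProj_apply (a f : Module.Dual K E) (x : E) :
    dualProj a x f = f - ((a x)⁻¹ * f x) • a := by
  simp [dualProj]

theorem dualProj_apply_apply (a f : Module.Dual K E) (x y : E) :
    dualProj a x f y = f (y - ((a x)⁻¹ * a y) • x) := by
  simp only [dualProj_apply, map_sub, map_smul, LinearMap.sub_apply, LinearMap.smul_apply,
    smul_eq_mul]
  ring

variable [LinearOrder K] [IsStrictOrderedRing K]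

theorem mem_hull_insert_of_dualProj_mem_hull {S : Set (Module.Dual K E)} {a b : Module.Dual K E}
    {x : E} (hS : ∀ f ∈ S, f x ≤ 0) (ha : 0 < a x) (hb : 0 ≤ b x)
    (hproj : dualProj a x b ∈ PointedCone.hull K (dualProj a x '' S)) :
    b ∈ PointedCone.hull K (insert a S) := by
  obtain ⟨g, hg, hgb⟩ : ∃ g ∈ PointedCone.hull K S, dualProj a x g = dualProj a x b := by
    rw [← PointedCone.mem_map]
    exact (Submodule.map_span _ _).ge hproj
  have hgx : g x ≤ 0 := by
    have hull_le : PointedCone.hull K S ≤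
        (PointedCone.positive K K).comap (-Module.Dual.eval K E x) :=
      Submodule.span_le.2 fun f hf => by simpa using hS f hf
    simpa using hull_le hg
  have b_eq : b = g + ((a x)⁻¹ * (b x - g x)) • a := by
    rw [dualProj_apply, dualProj_apply] at hgb
    linear_combination (norm := module) -hgb
  rw [b_eq]
  exact add_mem (Submodule.span_mono (Set.subset_insert _ _) hg)
    (PointedCone.smul_mem _ (mul_nonneg (inv_nonneg.2 ha.le) (sub_nonneg.2 (hgx.trans hb)))
      (PointedCone.subset_hull (Set.mem_insert _ _)))

theorem mem_hull_image_or_exists_forall_nonpos_and_pos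
    (s : Finset ι) (a : ι → Module.Dual K E) (b : Module.Dual K E) :
    b ∈ PointedCone.hull K (a '' s) ∨ ∃ x, (∀ i ∈ s, a i x ≤ 0) ∧ 0 < b x := by
  classical
  induction s using Finset.induction_on generalizing a b with
  | empty =>
    rcases eq_or_ne b 0 with rfl | hb
    · exact .inl (zero_mem _)
    · obtain ⟨x, hx⟩ := DFunLike.ne_iff.1 hb
      rcases lt_or_gt_of_ne hx with hx | hx
      · exact .inr ⟨-x, by simpa using hx⟩
      · exact .inr ⟨x, by simpa using hx⟩
  | insert k s _ ih =>
    rw [coe_insert, Set.image_insert_eq]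
    rcases ih a b with hb | ⟨x, hx, hbx⟩
    · exact .inl (Submodule.span_mono (Set.subset_insert _ _) hb)
    rcases le_or_gt (a k x) 0 with hkx | hkx
    · exact .inr ⟨x, forall_mem_insert _ _ _ |>.2 ⟨hkx, hx⟩, hbx⟩
    -- `x` separates `b` from all generators but `a k`; eliminate `a k` by projecting along it.
    rcases ih (dualProj (a k) x ∘ a) (dualProj (a k) x b) with hb | ⟨y, hy, hby⟩
    · rw [Set.image_comp] at hb
      exact .inl (mem_hull_insert_of_dualProj_mem_hull (Set.forall_mem_image.2 hx) hkx hbx.le hb)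
    · simp only [Function.comp_apply, dualProj_apply_apply] at hy hby
      refine .inr ⟨_, forall_mem_insert _ _ _ |>.2 ⟨?_, hy⟩, hby⟩
      rw [← dualProj_apply_apply, dualProj_apply, inv_mul_cancel₀ hkx.ne', one_smul, sub_self,
        LinearMap.zero_apply]

end Farkas

variable [LinearOrder K] [IsStrictOrderedRing K] {m n : Type*} [Fintype n] {A : Matrix m n K}
  {b : m → K} {c x : n → K}

/-- The feasible region of the linear program `max c ⬝ᵥ x` subject to `x ≥ 0` and `A *ᵥ x ≤ b`. -/
def primalFeasible (A : Matrix m n K) (b : m → K) : Set (n → K) :=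
  {x | 0 ≤ x ∧ A *ᵥ x ≤ b}

theorem inv_smul_add_mem_primalFeasible {x₀ : n → K}
    (hx₀ : x₀ ∈ primalFeasible A b) {ν : K} (hν : 0 ≤ ν) (hx : 0 ≤ x) (hAx : A *ᵥ x ≤ ν • b) :
    (1 + ν)⁻¹ • (x₀ + x) ∈ primalFeasible A b := by
  have pos : 0 < 1 + ν := by positivity
  refine ⟨smul_nonneg (inv_nonneg.2 pos.le) (add_nonneg hx₀.1 hx), ?_⟩
  rw [mulVec_smul, inv_smul_le_iff_of_pos pos, mulVec_add, add_smul, one_smul]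
  exact add_le_add hx₀.2 hAx

variable [Fintype m] {y : m → K}

/-- The feasible region of the dual program `min y ⬝ᵥ b` subject to `y ≥ 0` and
`c ≤ y ᵥ* A`. -/
def dualFeasible (A : Matrix m n K) (c : n → K) : Set (m → K) :=
  {y | 0 ≤ y ∧ c ≤ y ᵥ* A}

theorem mul_eq_zero_of_dotProduct_eq_zero {u v : n → K} (hu : 0 ≤ u) (hv : 0 ≤ v)
    (h : u ⬝ᵥ v = 0) (j : n) : u j * v j = 0 :=
  (Finset.sum_eq_zero_iff_of_nonneg fun i _ => mul_nonneg (hu i) (hv i)).1 h j (mem_univ j)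

theorem complementary_slackness
    (hx : x ∈ primalFeasible A b) (hy : y ∈ dualFeasible A c) (h : y ⬝ᵥ b ≤ c ⬝ᵥ x) :
    (∀ j, x j ≠ 0 → c j = (y ᵥ* A) j) ∧ ∀ i, y i ≠ 0 → (A *ᵥ x) i = b i := by
  have dual_gap : 0 ≤ (y ᵥ* A - c) ⬝ᵥ x :=
    dotProduct_nonneg_of_nonneg (sub_nonneg.2 hy.2) hx.1
  have primal_gap : 0 ≤ y ⬝ᵥ (b - A *ᵥ x) :=
    dotProduct_nonneg_of_nonneg hy.1 (sub_nonneg.2 hx.2)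
  have gap_le : (y ᵥ* A - c) ⬝ᵥ x + y ⬝ᵥ (b - A *ᵥ x) ≤ 0 := by
    rw [sub_dotProduct, dotProduct_sub, dotProduct_mulVec]
    linarith
  have dual_gap_eq := mul_eq_zero_of_dotProduct_eq_zero (sub_nonneg.2 hy.2) hx.1
    (by linarith)
  have primal_gap_eq := mul_eq_zero_of_dotProduct_eq_zero hy.1 (sub_nonneg.2 hx.2)
    (by linarith)
  exact ⟨fun j hj => (sub_eq_zero.1 ((mul_eq_zero.1 (dual_gap_eq j)).resolve_right hj)).symm,
    fun i hi => (sub_eq_zero.1 ((mul_eq_zero.1 (primal_gap_eq i)).resolve_left hi)).symm⟩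

theorem exists_nonneg_le_mulVec_or_exists_nonneg_vecMul_nonpos (A : Matrix m n K) (d : m → K) :
    (∃ y, 0 ≤ y ∧ d ≤ A *ᵥ y) ∨ ∃ x, 0 ≤ x ∧ x ᵥ* A ≤ 0 ∧ 0 < x ⬝ᵥ d := by
  classical
  let a : n ⊕ m → Module.Dual K (m → K) :=
    Sum.elim (fun j => dotProductEquiv K m (A.col j)) fun i => -LinearMap.proj i
  rcases mem_hull_image_or_exists_forall_nonpos_and_pos univ a (dotProductEquiv K m d) with
    hd | ⟨x, hx, hdx⟩
  · rw [coe_univ, Set.image_univ, PointedCone.hull, Submodule.mem_span_range_iff_exists_fun] at hd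
    obtain ⟨c, hcd⟩ := hd
    have coe_smul_apply (r : {r : K // 0 ≤ r}) (f : Module.Dual K (m → K)) (v : m → K) :
        (r • f) v = r * f v := rfl
    refine .inl ⟨fun j => c (.inl j), fun j => (c _).2, fun i => ?_⟩
    have d_eq : ∑ j, A i j * c (.inl j) - c (.inr i) = d i := by
      simpa [a, coe_smul_apply, Pi.single_apply, sub_eq_add_neg, mul_comm] using
        LinearMap.congr_fun hcd (Pi.single i 1)
    rw [← d_eq]
    exact sub_le_self _ (c (.inr i)).2
  · refine .inr ⟨x, fun i => ?_, fun j => ?_, ?_⟩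
    · simpa [a] using hx (.inr i) (mem_univ _)
    · have col_nonpos : x ⬝ᵥ A.col j ≤ 0 := by
        simpa [a, dotProduct_comm] using hx (.inl j) (mem_univ _)
      exact col_nonpos
    · rwa [dotProduct_comm]

theorem homogeneous_lp_alternative (A : Matrix m n K) (b : m → K) (c d : n → K) (v δ : K) :
    (∃ (y : m → K) (τ : K), 0 ≤ y ∧ 0 ≤ τ ∧ τ • c + d ≤ y ᵥ* A ∧ y ⬝ᵥ b ≤ τ * v + δ) ∨
      ∃ (x : n → K) (ν : K), 0 ≤ x ∧ 0 ≤ ν ∧ A *ᵥ x ≤ ν • b ∧ ν * v ≤ c ⬝ᵥ x ∧ ν * δ < d ⬝ᵥ x := by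
  let B : Matrix (n ⊕ Unit) (m ⊕ Unit) K :=
    fromBlocks Aᵀ (-replicateCol Unit c) (-replicateRow Unit b) (of fun _ _ => v)
  rcases exists_nonneg_le_mulVec_or_exists_nonneg_vecMul_nonpos B (Sum.elim d fun _ => -δ) with
    ⟨y, hy, hyB⟩ | ⟨x, hx, hxB, hpos⟩
  · refine .inl ⟨y ∘ .inl, y (.inr ()), fun i => hy _, hy _, fun j => ?_, ?_⟩
    · simpa [B, fromBlocks_mulVec, neg_mulVec, mulVec, vecMul, dotProduct, mul_comm,
        add_comm] using hyB (.inl j)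
    · simpa [B, fromBlocks_mulVec, mulVec, dotProduct, mul_comm] using hyB (.inr ())
  · refine .inr ⟨x ∘ .inl, x (.inr ()), fun i => hx _, hx _, fun j => ?_, ?_, ?_⟩
    · simpa [B, vecMul_fromBlocks, vecMul_transpose, vecMul, mulVec, dotProduct,
        mul_comm] using hxB (.inl j)
    · simpa [B, vecMul_fromBlocks, vecMul, dotProduct, mul_comm] using hxB (.inr ())
    · simpa [dotProduct, mul_comm] using hpos

theorem exists_mem_dualFeasible_forall_lt {x₀ : n → K} (hx₀ : x₀ ∈ primalFeasible A b)
    (hmax : ∀ x ∈ primalFeasible A b, c ⬝ᵥ x ≤ c ⬝ᵥ x₀) {S : Finset n}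
    (hS : ∀ x ∈ primalFeasible A b, c ⬝ᵥ x = c ⬝ᵥ x₀ → ∀ j ∈ S, x j = 0) :
    ∃ y ∈ dualFeasible A c, y ⬝ᵥ b ≤ c ⬝ᵥ x₀ ∧ ∀ j ∈ S, c j < (y ᵥ* A) j := by
  classical
  let e : n → K := fun j => if j ∈ S then 1 else 0
  rcases homogeneous_lp_alternative A b c (c + e) (c ⬝ᵥ x₀) (c ⬝ᵥ x₀) with
    ⟨y, τ, hy, hτ, hyA, hyb⟩ | ⟨x, ν, hx, hν, hAx, hcx, hex⟩
  · have pos : 0 < τ + 1 := by positivity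
    have margin j : c j + (τ + 1)⁻¹ * e j ≤ (((τ + 1)⁻¹ • y) ᵥ* A) j := by
      rw [smul_vecMul, Pi.smul_apply, smul_eq_mul, le_inv_mul_iff₀ pos, mul_add,
        mul_inv_cancel_left₀ pos.ne']
      linarith [show τ * c j + (c j + e j) ≤ (y ᵥ* A) j from hyA j]
    refine ⟨(τ + 1)⁻¹ • y, ⟨smul_nonneg (inv_nonneg.2 pos.le) hy, fun j => ?_⟩, ?_, fun j hj => ?_⟩
    · refine le_trans (le_add_of_nonneg_right ?_) (margin j)
      exact mul_nonneg (inv_nonneg.2 pos.le) (ite_nonneg zero_le_one le_rfl)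
    · rw [smul_dotProduct, smul_eq_mul, inv_mul_le_iff₀ pos]
      linarith
    · refine lt_of_lt_of_le (lt_add_of_pos_right _ ?_) (margin j)
      simpa [e, hj] using pos
  · -- Otherwise moving from `x₀` along `x` would reach an optimum that is nonzero on `S`.
    have feasible := inv_smul_add_mem_primalFeasible hx₀ hν hx hAx
    have pos : 0 < 1 + ν := by positivity
    have value x : c ⬝ᵥ ((1 + ν)⁻¹ • (x₀ + x)) = (1 + ν)⁻¹ * (c ⬝ᵥ x₀ + c ⬝ᵥ x) := by
      rw [dotProduct_smul, dotProduct_add, smul_eq_mul]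
    have le_value := hmax _ feasible
    rw [value, inv_mul_le_iff₀ pos] at le_value
    have value_eq : c ⬝ᵥ x = ν * c ⬝ᵥ x₀ := by linarith
    have vanish : ∀ j ∈ S, x j = 0 := by
      intro j hj
      have sum_vanish := hS _ feasible (by rw [value, value_eq]; field_simp) j hj
      have add_eq_zero : x₀ j + x j = 0 := by simpa [pos.ne'] using sum_vanish
      linarith [show 0 ≤ x j from hx j, show 0 ≤ x₀ j from hx₀.1 j]
    have dotProduct_eq_zero : e ⬝ᵥ x = 0 := by simpa [e, dotProduct] using Finset.sum_eq_zero vanish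
    rw [add_dotProduct, dotProduct_eq_zero] at hex
    linarith

end LinearProgramming

section MatchingLP

open Matrix

variable {U : Type*}

section IncMatrix

variable {R : Type*} [NonAssocSemiring R] [Fintype U] [DecidableEq U] (G : SimpleGraph U)
  [DecidableRel G.Adj]

theorem incMatrix_mulVec (x : Sym2 U → R) (i : U) :
    (G.incMatrix R *ᵥ x) i = ∑ j ∈ G.neighborFinset i, x s(i, j) := by
  simp only [mulVec, dotProduct, SimpleGraph.incMatrix_apply', ite_mul, one_mul, zero_mul]
  rw [← Finset.sum_filter]
  refine (Finset.sum_bij (fun j _ => s(i, j)) (fun j hj => ?_) (fun j _ k _ h => ?_)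
    (fun e he => ?_) fun _ _ => rfl).symm
  · simpa using hj
  · exact Sym2.congr_right.1 h
  · obtain ⟨he, hi⟩ := (mem_filter.1 he).2
    obtain ⟨j, rfl⟩ := Sym2.mem_iff_exists.1 hi
    exact ⟨j, by simpa using he, rfl⟩

variable {G}

theorem vecMul_incMatrix_of_adj (y : U → R) {i j : U} (h : G.Adj i j) :
    (y ᵥ* G.incMatrix R) s(i, j) = y i + y j := by
  simp only [vecMul, dotProduct, SimpleGraph.incMatrix_apply', SimpleGraph.mk'_mem_incidenceSet_iff,
    h, true_and, mul_ite, mul_one, mul_zero]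
  rw [← Finset.sum_filter, ← Finset.sum_pair h.ne]
  exact Finset.sum_congr (by ext; simp) fun _ _ => rfl

end IncMatrix

variable {G : SimpleGraph U} {w x : U → U → ℝ}

/-- The column vector over unordered pairs, supported on the edges of `G`, of a symmetric family
indexed by ordered pairs. -/
noncomputable def edgeVector (G : SimpleGraph U) (f : U → U → ℝ) (hf : ∀ i j, f i j = f j i) :
    Sym2 U → ℝ :=
  G.edgeSet.indicator (Sym2.lift ⟨f, hf⟩)

/-- The symmetric family indexed by ordered pairs of a vector over unordered pairs, restricted to
the edges of `G`. -/
def ofEdgeVector (G : SimpleGraph U) [DecidableRel G.Adj] (x : Sym2 U → ℝ) (i j : U) : ℝ :=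
  if G.Adj i j then x s(i, j) else 0

theorem edgeVector_of_adj {f : U → U → ℝ} {hf : ∀ i j, f i j = f j i} {i j : U}
    (h : G.Adj i j) : edgeVector G f hf s(i, j) = f i j :=
  Set.indicator_of_mem (G.mem_edgeSet.2 h) _

variable [DecidableRel G.Adj]

theorem ofEdgeVector_edgeVector {hx : ∀ i j, x i j = x j i} (h : ∀ i j, ¬G.Adj i j → x i j = 0) :
    ofEdgeVector G (edgeVector G x hx) = x := by
  ext i j
  by_cases hij : G.Adj i j
  · rw [ofEdgeVector, if_pos hij, edgeVector_of_adj hij]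
  · rw [ofEdgeVector, if_neg hij, h i j hij]

variable [Fintype U]

theorem lpVal_ofEdgeVector (hw : ∀ i j, w i j = w j i) (z : Sym2 U → ℝ) :
    LPval G w (ofEdgeVector G z) = edgeVector G w hw ⬝ᵥ z := by
  classical
  have double_count (f : Sym2 U → ℝ) (hf : ∀ e ∉ G.edgeSet, f e = 0) :
      ∑ i, ∑ j ∈ G.neighborFinset i, f s(i, j) = 2 * ∑ e, f e := by
    simp_rw [← incMatrix_mulVec, mulVec, dotProduct]
    rw [Finset.sum_comm, Finset.mul_sum]
    refine Finset.sum_congr rfl fun e _ => ?_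
    rw [← Finset.sum_mul]
    by_cases he : e ∈ G.edgeSet
    · rw [G.sum_incMatrix_apply_of_mem_edgeSet he]
    · rw [hf e he, mul_zero, mul_zero]
  have sum_eq := double_count (fun e => edgeVector G w hw e * z e) fun e he => by
    rw [edgeVector, Set.indicator_of_notMem he, zero_mul]
  rw [LPval, dotProduct, ← mul_right_inj' (two_ne_zero (α := ℝ)), ← sum_eq]
  rw [one_div, mul_inv_cancel_left₀ two_ne_zero]
  refine Finset.sum_congr rfl fun i _ => Finset.sum_congr rfl fun j hj => ?_
  have h : G.Adj i j := by simpa using hj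
  rw [edgeVector_of_adj h, ofEdgeVector, if_pos h]

theorem dotProduct_edgeVector_of_lpFeasible (hw : ∀ i j, w i j = w j i) (hx : LPFeasible G x) :
    edgeVector G w hw ⬝ᵥ edgeVector G x hx.1 = LPval G w x := by
  rw [← lpVal_ofEdgeVector, ofEdgeVector_edgeVector hx.2.2.1]

section Feasible

variable [DecidableEq U] {z : Sym2 U → ℝ}

theorem edgeVector_mem_primalFeasible (hx : LPFeasible G x) :
    edgeVector G x hx.1 ∈ primalFeasible (G.incMatrix ℝ) 1 := by
  refine ⟨fun e => Set.indicator_nonneg (fun e _ => ?_) e, fun i => ?_⟩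
  · induction e using Sym2.ind with | _ i j => exact hx.2.1 i j
  · rw [incMatrix_mulVec]
    refine le_trans (le_of_eq ?_) (hx.2.2.2 i)
    exact Finset.sum_congr rfl fun j hj => edgeVector_of_adj (by simpa using hj)

theorem lpFeasible_ofEdgeVector (hz : z ∈ primalFeasible (G.incMatrix ℝ) 1) :
    LPFeasible G (ofEdgeVector G z) := by
  refine ⟨fun i j => ?_, fun i j => ?_, fun i j h => if_neg h, fun i => ?_⟩
  · simp only [ofEdgeVector, G.adj_comm i j, Sym2.eq_swap (a := i)]
  · exact ite_nonneg (hz.1 _) le_rfl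
  · refine le_trans (le_of_eq ?_) (hz.2 i)
    rw [incMatrix_mulVec]
    exact Finset.sum_congr rfl fun j hj => if_pos (by simpa using hj)

theorem dotProduct_edgeVector_le_of_lpOptimal (hw : ∀ i j, w i j = w j i) (hx : LPOptimal G w x)
    (hz : z ∈ primalFeasible (G.incMatrix ℝ) 1) :
    edgeVector G w hw ⬝ᵥ z ≤ edgeVector G w hw ⬝ᵥ edgeVector G x hx.1.1 := by
  rw [dotProduct_edgeVector_of_lpFeasible hw hx.1, ← lpVal_ofEdgeVector]
  exact hx.2 _ (lpFeasible_ofEdgeVector hz)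

theorem lpOptimal_ofEdgeVector {hw : ∀ i j, w i j = w j i} (hx : LPOptimal G w x)
    (hz : z ∈ primalFeasible (G.incMatrix ℝ) 1)
    (hval : edgeVector G w hw ⬝ᵥ z = edgeVector G w hw ⬝ᵥ edgeVector G x hx.1.1) :
    LPOptimal G w (ofEdgeVector G z) := by
  rw [dotProduct_edgeVector_of_lpFeasible hw hx.1, ← lpVal_ofEdgeVector] at hval
  exact ⟨lpFeasible_ofEdgeVector hz, fun z' hz' => hval ▸ hx.2 z' hz'⟩

end Feasible

theorem exists_dualFeasible_strictly_complementary (hw : ∀ i j, w i j = w j i)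
    (hx : LPOptimal G w x) (huniq : ∀ z, LPOptimal G w z → z = x) :
    ∃ y, DualFeasible G w y ∧ (∀ i j, G.Adj i j → x i j = 0 → w i j < y i + y j) ∧
      (∀ i j, x i j ≠ 0 → y i + y j = w i j) ∧
      ∀ i, ∑ j ∈ G.neighborFinset i, x i j ≠ 1 → y i = 0 := by
  classical
  let x₀ := edgeVector G x hx.1.1
  have x₀_of_adj {i j : U} (h : G.Adj i j) : x₀ s(i, j) = x i j := edgeVector_of_adj h
  have x₀_feasible : x₀ ∈ primalFeasible (G.incMatrix ℝ) 1 := edgeVector_mem_primalFeasible hx.1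
  obtain ⟨y, hy, hyb, hlt⟩ := exists_mem_dualFeasible_forall_lt
    (S := {e | e ∈ G.edgeSet ∧ x₀ e = 0}) x₀_feasible
    (fun z => dotProduct_edgeVector_le_of_lpOptimal hw hx)
    fun z hz hval e he => by
      induction e using Sym2.ind with | _ i j =>
      obtain ⟨h, hij⟩ := (mem_filter.1 he).2
      rw [G.mem_edgeSet] at h
      rwa [x₀_of_adj h, ← huniq _ (lpOptimal_ofEdgeVector hx hz hval), ofEdgeVector,
        if_pos h] at hij
  obtain ⟨tight, saturated⟩ := complementary_slackness x₀_feasible hy hyb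
  refine ⟨y, ⟨hy.1, fun i j h => ?_⟩, fun i j h hij => ?_, fun i j hij => ?_, fun i hi => ?_⟩
  · simpa only [edgeVector_of_adj h, vecMul_incMatrix_of_adj y h] using hy.2 s(i, j)
  · simpa only [edgeVector_of_adj h, vecMul_incMatrix_of_adj y h] using
      hlt s(i, j) (by simpa [h, x₀_of_adj h] using hij)
  · have h : G.Adj i j := by_contra fun h => hij (hx.1.2.2.1 i j h)
    have w_eq := tight s(i, j) (by rwa [x₀_of_adj h])
    rwa [edgeVector_of_adj h, vecMul_incMatrix_of_adj y h, eq_comm] at w_eq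
  · by_contra hyi
    refine hi (Eq.trans ?_ (saturated i hyi))
    rw [incMatrix_mulVec]
    exact Finset.sum_congr rfl fun j hj => (x₀_of_adj (by simpa using hj)).symm

/-- A strict complementarity certificate for the matching `M`: dual prices that are tight exactly on
the edges of `M` and vanish at unmatched nodes. -/
structure StrictlyComplementary (G : SimpleGraph U) (w : U → U → ℝ) (M : U → U → Prop)
    (y : U → ℝ) : Prop where
  nonneg : ∀ i, 0 ≤ y i
  lt_of_not_matched : ∀ i j, G.Adj i j → ¬M i j → w i j < y i + y j
  eq_of_matched : ∀ i j, M i j → y i + y j = w i j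
  eq_zero_of_unmatched : ∀ i, (∀ j, ¬M i j) → y i = 0

theorem exists_strictlyComplementary {M : U → U → Prop} (hw : ∀ i j, w i j = w j i)
    (hopt : LPOptimal G w (mInd M)) (huniq : ∀ x, LPOptimal G w x → x = mInd M) :
    ∃ y, StrictlyComplementary G w M y := by
  obtain ⟨y, hy, hlt, heq, hzero⟩ := exists_dualFeasible_strictly_complementary hw hopt huniq
  refine ⟨y, hy.1, fun i j h hij => hlt i j h (if_neg hij), fun i j hij => heq i j ?_,
    fun i hi => hzero i ?_⟩
  · rw [mInd, if_pos hij]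
    exact one_ne_zero
  · rw [Finset.sum_eq_zero fun j _ => show mInd M i j = 0 from if_neg (hi j)]
    exact zero_ne_one

end MatchingLP

section Fmax

variable {U : Type*} {s : Finset U} {f g : U → ℝ}

theorem fmax_nonneg (hf : ∀ k ∈ s, 0 ≤ f k) : 0 ≤ fmax s f :=
  Real.iSup_nonneg fun k => Real.iSup_nonneg fun hk => hf k hk

theorem fmax_le {a : ℝ} (ha : 0 ≤ a) (hf : ∀ k ∈ s, f k ≤ a) : fmax s f ≤ a :=
  Real.iSup_le (fun k => Real.iSup_le (fun hk => hf k hk) ha) ha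

theorem fmax_congr (h : ∀ k ∈ s, f k = g k) : fmax s f = fmax s g :=
  iSup_congr fun k => iSup_congr fun hk => h k hk

variable [Finite U]

theorem le_fmax {k : U} (hk : k ∈ s) : f k ≤ fmax s f :=
  (ciSup_pos (f := fun _ => f k) hk).ge.trans
    (le_ciSup (f := fun k => ⨆ _ : k ∈ s, f k) (Set.finite_range _).bddAbove k)

theorem exists_eq_fmax_of_pos (h : 0 < fmax s f) : ∃ k ∈ s, f k = fmax s f := by
  rcases s.eq_empty_or_nonempty with rfl | hs
  · exact absurd h (fmax_le le_rfl (by simp)).not_gt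
  obtain ⟨k, hk, hmax⟩ := s.exists_max_image f hs
  have fmax_le_max : fmax s f ≤ max 0 (f k) :=
    fmax_le (le_max_left _ _) fun j hj => le_max_of_le_right (hmax j hj)
  exact ⟨k, hk, (le_fmax hk).antisymm ((le_max_iff.1 fmax_le_max).resolve_left h.not_ge)⟩

theorem max_fmax_erase [DecidableEq U] {a : U} (ha : a ∈ s) (hf : ∀ k ∈ s, 0 ≤ f k) :
    max (fmax (s.erase a) f) (f a) = fmax s f := by
  refine le_antisymm (max_le ?_ (le_fmax ha)) (fmax_le ?_ fun k hk => ?_)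
  · exact fmax_le (fmax_nonneg hf) fun k hk => le_fmax (mem_of_mem_erase hk)
  · exact le_max_of_le_right (hf a ha)
  · rcases eq_or_ne k a with rfl | hka
    · exact le_max_right _ _
    · exact le_max_of_le_left (le_fmax (mem_erase.2 ⟨hka, hk⟩))

end Fmax

section FixedPoint

variable {U : Type*} {w α : U → U → ℝ}

theorem offer_nonneg {i j : U} (h : 0 ≤ α j i) : 0 ≤ offer w α i j := by
  grind [offer, pos]

theorem offer_eq_pos_sub {i j : U} (h : 0 ≤ α j i) :
    offer w α i j = pos (w i j - (α i j + 1 / 2 * pos (w i j - α i j - α j i))) := by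
  grind [offer, pos]

theorem max_offer {i j : U} (hw : w j i = w i j) (h : 0 ≤ α i j) :
    max (α i j) (offer w α j i) = α i j + 1 / 2 * pos (w i j - α i j - α j i) := by
  grind [offer, pos]

variable [Fintype U] {G : SimpleGraph U} [DecidableRel G.Adj]

theorem offer_nonneg_of_validMsg (hval : ValidMsg G α) {i k : U} (hk : k ∈ G.neighborFinset i) :
    0 ≤ offer w α k i :=
  offer_nonneg (hval i k (by simpa using hk))

theorem earn_nonneg (hval : ValidMsg G α) (i : U) : 0 ≤ earn G w α i :=
  fmax_nonneg fun _ => offer_nonneg_of_validMsg hval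

variable [DecidableEq U]

theorem earn_eq_max (hval : ValidMsg G α) {i j : U} (h : G.Adj i j) :
    earn G w α i = max (upd G w α i j) (offer w α j i) :=
  (max_fmax_erase (by simpa using h) fun _ => offer_nonneg_of_validMsg hval).symm

namespace IsFixedPt

variable {i j : U}

theorem earn_eq (hfp : IsFixedPt G w α) (hw : ∀ i j, w i j = w j i) (hval : ValidMsg G α)
    (h : G.Adj i j) : earn G w α i = α i j + 1 / 2 * pos (w i j - α i j - α j i) := by
  rw [earn_eq_max hval h, hfp i j h, max_offer (hw j i) (hval i j h)]

theorem offer_eq (hfp : IsFixedPt G w α) (hw : ∀ i j, w i j = w j i) (hval : ValidMsg G α)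
    (h : G.Adj i j) : offer w α j i = pos (w i j - earn G w α j) := by
  rw [offer_eq_pos_sub (hval i j h), ← hfp.earn_eq hw hval h.symm, hw j i]

theorem bestAlt_earn (hfp : IsFixedPt G w α) (hw : ∀ i j, w i j = w j i) (hval : ValidMsg G α)
    (h : G.Adj i j) : bestAlt G w (earn G w α) i j = α i j := by
  rw [← hfp i j h]
  exact fmax_congr fun k hk =>
    (hfp.offer_eq hw hval (by simpa using mem_of_mem_erase hk)).symm

end IsFixedPt

/-- The properties of the earnings at a fixed point that determine the outcome: dual feasibility,
unmatched balance, and a tight edge at every node with positive earnings. -/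
structure IsBalancedDual (G : SimpleGraph U) [DecidableRel G.Adj] (w : U → U → ℝ) (γ : U → ℝ) :
    Prop where
  dualFeasible : DualFeasible G w γ
  unmatchedBalance : UnmatchedBalance G w γ
  exists_tight : ∀ i, 0 < γ i → ∃ j, G.Adj i j ∧ γ i + γ j = w i j

theorem IsFixedPt.isBalancedDual_earn (hfp : IsFixedPt G w α) (hw : ∀ i j, w i j = w j i)
    (hval : ValidMsg G α) : IsBalancedDual G w (earn G w α) := by
  refine ⟨⟨earn_nonneg hval, fun i j h => ?_⟩, fun i j h => ?_, fun i hi => ?_⟩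
  · rw [hfp.earn_eq hw hval h, hfp.earn_eq hw hval h.symm, hw j i, sub_right_comm]
    have le_pos : w i j - α j i - α i j ≤ pos (w i j - α j i - α i j) := le_max_left _ _
    linarith
  · rw [hfp.bestAlt_earn hw hval h, hfp.bestAlt_earn hw hval h.symm, hfp.earn_eq hw hval h,
      hfp.earn_eq hw hval h.symm, hw j i, sub_right_comm (w i j)]
    ring
  · obtain ⟨k, hk, best⟩ := exists_eq_fmax_of_pos hi
    have adj : G.Adj i k := by simpa using hk
    change offer w α k i = earn G w α i at best
    rw [hfp.offer_eq hw hval adj] at best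
    refine ⟨k, adj, ?_⟩
    grind [pos]

end FixedPoint

section BalancedDual

variable {U : Type*} {G : SimpleGraph U} {w : U → U → ℝ} {M : U → U → Prop} {γ y : U → ℝ}
  {i j k : U}

/-- A tight edge outside the matching: an equally good alternative partner. -/
def TightOffMatching (G : SimpleGraph U) (w : U → U → ℝ) (M : U → U → Prop) (γ : U → ℝ)
    (i j : U) : Prop :=
  G.Adj i j ∧ ¬M i j ∧ γ i + γ j = w i j

theorem TightOffMatching.symm (hw : ∀ i j, w i j = w j i) (hM : ∀ i j, M i j → M j i)
    (h : TightOffMatching G w M γ i j) : TightOffMatching G w M γ j i :=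
  ⟨h.1.symm, fun hij => h.2.1 (hM j i hij), by rw [add_comm, h.2.2, hw]⟩

variable [Fintype U] [DecidableEq U] [DecidableRel G.Adj]

theorem bestAlt_nonneg (i j : U) : 0 ≤ bestAlt G w γ i j :=
  fmax_nonneg fun _ _ => le_max_right _ _

theorem sub_le_bestAlt (h : G.Adj i k) (hk : k ≠ j) : w i k - γ k ≤ bestAlt G w γ i j :=
  (le_max_left _ 0).trans <|
    le_fmax (f := fun k => pos (w i k - γ k)) (mem_erase.2 ⟨hk, by simpa using h⟩)

theorem bestAlt_lt (hi : 0 < γ i) (h : ∀ k, G.Adj i k → k ≠ j → w i k < γ i + γ k) :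
    bestAlt G w γ i j < γ i := by
  by_contra! le
  obtain ⟨k, hk, best⟩ := exists_eq_fmax_of_pos (hi.trans_le le)
  have lt := h k (by simpa using mem_of_mem_erase hk) (ne_of_mem_erase hk)
  change γ i ≤ fmax _ _ at le
  rw [← best, pos, le_max_iff] at le
  rcases le with le | le <;> linarith

namespace IsBalancedDual

theorem pos_or_pos_of_adj (hγ : IsBalancedDual G w γ) (hw : GoodW G w) (h : G.Adj i j) :
    0 < γ i ∨ 0 < γ j := by
  by_contra! nonpos
  linarith [hw.2 i j h, hγ.dualFeasible.2 i j h]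

theorem exists_tightOffMatching_of_matched (hγ : IsBalancedDual G w γ) (hM : IsMatching G M)
    (hij : M i j) (hi : 0 < γ i) (hjk : TightOffMatching G w M γ j k) :
    ∃ l, TightOffMatching G w M γ i l := by
  by_contra! strict
  have bestAlt_i_lt : bestAlt G w γ i j < γ i := bestAlt_lt hi fun l h hl =>
    (hγ.dualFeasible.2 i l h).lt_of_ne fun tight =>
      strict l ⟨h, fun hil => hl (hM.unique i l j hil hij), tight.symm⟩
  have le_bestAlt_j : w j k - γ k ≤ bestAlt G w γ j i :=
    sub_le_bestAlt hjk.1 fun hki => hjk.2.1 (hki ▸ hM.symm i j hij)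
  linarith [hγ.unmatchedBalance i j (hM.subset i j hij), hjk.2.2]

theorem sub_nonpos_or_le_neg (hγ : IsBalancedDual G w γ) (hM : IsMatching G M)
    (hy : StrictlyComplementary G w M y) {m : ℝ}
    (hm : ∀ v, 0 < γ v → (∃ k, TightOffMatching G w M γ v k) → m ≤ y v - γ v)
    (hij : TightOffMatching G w M γ i j) : y i - γ i ≤ 0 ∨ y i - γ i ≤ -m := by
  by_cases matched : ∃ p, M i p
  · obtain ⟨p, hip⟩ := matched
    have sum_nonpos : (y i - γ i) + (y p - γ p) ≤ 0 := by
      linarith [hy.eq_of_matched i p hip, hγ.dualFeasible.2 i p (hM.subset i p hip)]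
    rcases (hγ.dualFeasible.1 p).eq_or_lt' with hp | hp
    · left
      linarith [hy.nonneg p]
    · right
      linarith [hm p hp (hγ.exists_tightOffMatching_of_matched hM (hM.symm i p hip) hp hij)]
  · left
    linarith [hy.eq_zero_of_unmatched i (not_exists.1 matched), hγ.dualFeasible.1 i]

theorem not_tightOffMatching (hγ : IsBalancedDual G w γ) (hw : GoodW G w) (hM : IsMatching G M)
    (hy : StrictlyComplementary G w M y) (i j : U) : ¬TightOffMatching G w M γ i j := by
  intro hij
  let bad : Set U := {v | 0 < γ v ∧ ∃ k, TightOffMatching G w M γ v k}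
  have bad_nonempty : bad.Nonempty := by
    rcases hγ.pos_or_pos_of_adj hw hij.1 with hi | hj
    · exact ⟨i, hi, j, hij⟩
    · exact ⟨j, hj, i, hij.symm hw.1 hM.symm⟩
  obtain ⟨v, ⟨-, u, hvu⟩, v_min⟩ :=
    bad.exists_min_image (fun v => y v - γ v) bad.toFinite bad_nonempty
  have at_v := hγ.sub_nonpos_or_le_neg hM hy (fun v hv h => v_min v ⟨hv, h⟩) hvu
  have at_u := hγ.sub_nonpos_or_le_neg hM hy (fun v hv h => v_min v ⟨hv, h⟩)
    (hvu.symm hw.1 hM.symm)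
  have sum_pos : 0 < (y v - γ v) + (y u - γ u) := by
    linarith [hy.lt_of_not_matched v u hvu.1 hvu.2.1, hvu.2.2]
  rcases at_u with hu | hu <;> rcases at_v with hv | hv <;> linarith

theorem lt_add_of_not_matched (hγ : IsBalancedDual G w γ) (hw : GoodW G w) (hM : IsMatching G M)
    (hy : StrictlyComplementary G w M y) (h : G.Adj i j) (hij : ¬M i j) : w i j < γ i + γ j :=
  (hγ.dualFeasible.2 i j h).lt_of_ne fun tight =>
    hγ.not_tightOffMatching hw hM hy i j ⟨h, hij, tight.symm⟩

theorem exists_matched_of_pos (hγ : IsBalancedDual G w γ) (hw : GoodW G w) (hM : IsMatching G M)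
    (hy : StrictlyComplementary G w M y) (hi : 0 < γ i) : ∃ j, M i j ∧ γ i + γ j = w i j := by
  obtain ⟨j, h, tight⟩ := hγ.exists_tight i hi
  exact ⟨j, by_contra fun hij => hγ.not_tightOffMatching hw hM hy i j ⟨h, hij, tight⟩, tight⟩

theorem add_eq_of_matched (hγ : IsBalancedDual G w γ) (hw : GoodW G w) (hM : IsMatching G M)
    (hy : StrictlyComplementary G w M y) (hij : M i j) : γ i + γ j = w i j := by
  rcases hγ.pos_or_pos_of_adj hw (hM.subset i j hij) with hi | hj
  · obtain ⟨k, hik, tight⟩ := hγ.exists_matched_of_pos hw hM hy hi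
    rwa [hM.unique i j k hij hik]
  · obtain ⟨k, hjk, tight⟩ := hγ.exists_matched_of_pos hw hM hy hj
    rwa [add_comm, hw.1, hM.unique j i k (hM.symm i j hij) hjk]

theorem pos_of_matched (hγ : IsBalancedDual G w γ) (hw : GoodW G w) (hM : IsMatching G M)
    (hy : StrictlyComplementary G w M y) (hij : M i j) : 0 < γ i := by
  refine (hγ.dualFeasible.1 i).lt_of_ne' fun hi => ?_
  have adj := hM.subset i j hij
  have hj : 0 < γ j := by
    linarith [hγ.add_eq_of_matched hw hM hy hij, hw.2 i j adj]
  have bestAlt_j_lt : bestAlt G w γ j i < γ j := bestAlt_lt hj fun k h hk =>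
    hγ.lt_add_of_not_matched hw hM hy h fun hjk => hk (hM.unique j k i hjk (hM.symm i j hij))
  linarith [hγ.unmatchedBalance i j adj, bestAlt_nonneg (G := G) (w := w) (γ := γ) i j]

theorem isNBSolution (hγ : IsBalancedDual G w γ) (hw : GoodW G w) (hM : IsMatching G M)
    (hy : StrictlyComplementary G w M y) : IsNBSolution G w M γ := by
  refine ⟨⟨hM, hγ.dualFeasible.1, fun i j => hγ.add_eq_of_matched hw hM hy, fun i hi => ?_⟩,
    fun i j h _ => hγ.dualFeasible.2 i j h,
    fun i j hij => hγ.unmatchedBalance i j (hM.subset i j hij)⟩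
  refine (hγ.dualFeasible.1 i).eq_of_not_lt' fun pos => ?_
  obtain ⟨j, hij, -⟩ := hγ.exists_matched_of_pos hw hM hy pos
  exact hi j hij

end IsBalancedDual

theorem IsFixedPt.induces {α : U → U → ℝ} (hfp : IsFixedPt G w α) (hw : GoodW G w)
    (hval : ValidMsg G α) (hM : IsMatching G M) (hy : StrictlyComplementary G w M y) :
    Induces G (offer w α) M := by
  have hγ := hfp.isBalancedDual_earn hw.1 hval
  refine ⟨hM, fun i ⟨k, hik, offer_pos⟩ => ?_, fun i hi j hij => ?_⟩
  · have earn_pos : 0 < earn G w α i := offer_pos.trans_le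
      (le_fmax (f := fun k => offer w α k i) (by simpa using hik))
    obtain ⟨j, hij, tight⟩ := hγ.exists_matched_of_pos hw hM hy earn_pos
    have offer_j : offer w α j i = earn G w α i := by
      rw [hfp.offer_eq hw.1 hval (hM.subset i j hij), ← tight, add_sub_cancel_right, pos,
        max_eq_left earn_pos.le]
    refine ⟨j, hij, fun l hil hlj => ?_⟩
    have lt := hγ.lt_add_of_not_matched hw hM hy hil fun h => hlj (hM.unique i l j h hij)
    rw [offer_j, hfp.offer_eq hw.1 hval hil]
    exact max_lt (by linarith) earn_pos
  · exact (hγ.pos_of_matched hw hM hy hij).ne' hi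

end BalancedDual

/-- If the LP relaxation of maximum weight matching has a unique
optimum, which is integral and corresponds to the matching `M*`, then every fixed
point of the natural dynamics induces `M*` and its earnings vector, together with
`M*`, forms a Nash bargaining solution. -/
theorem fixedPoint_gives_NB
    {V : Type*} [Fintype V] [DecidableEq V] (G : SimpleGraph V) [DecidableRel G.Adj]
    (w : V → V → ℝ) (hw : GoodW G w)
    (Mstar : V → V → Prop) (hM : IsMatching G Mstar)
    (hopt : LPOptimal G w (mInd Mstar))
    (huniq : ∀ x, LPOptimal G w x → x = mInd Mstar)
    (α : V → V → ℝ) (hval : ValidMsg G α) (hfp : IsFixedPt G w α) :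
    Induces G (offer w α) Mstar ∧ IsNBSolution G w Mstar (earn G w α) := by
  obtain ⟨y, hy⟩ := exists_strictlyComplementary hw.1 hopt huniq
  exact ⟨hfp.induces hw hval hM hy, (hfp.isBalancedDual_earn hw.1 hval).isNBSolution hw hM hy⟩

end EN
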